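/- Let A be a probabilistic parity word automaton over Σ. Suppose a word w ∈ Σ^ω is almost-surely accepted by A (the set of accepting runs of A on w has μ_w-measure 1). Define the Σ-tree t by t(u) = w_{|u|} for all u ∈ {0,1}^*, and let A_W be the probabilistic parity tree automaton obtained from A by copying each word transition to both children: δ'(p,a,q,q) = δ(p,a,q) and δ'(p,a,q,q') = 0 for q ≠ q'. Then t belongs to the qualitative almost-sure language of A_W: the set of qualitatively accepting runs of A_W on t has measure 1. In particular, if the almost-sure language of A is nonempty then the qualitative almost-sure language of A_W is nonempty. -/

import Mathlib

/-!
Fix a branch `β`. In `A_W` both children of a node always receive the same state, so a run of `A_W`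
read along `β` is a Markov chain with the transitions of the word automaton on `w`: its law is
`μw`. Hence for each `β`, almost every run of `A_W` satisfies the parity condition along `β`, and
Fubini's theorem turns "for every branch, almost every run" into "for almost every run,
almost every branch".

The identification of the law is `map_branch_eq`. It only needs the lower bound `cyl_le` on
cylinders: two probability measures on a finite set that compare on singletons coincide, and
measures on `ℕ → Q` are determined by their finite-dimensional marginals. The lower bound is
obtained by induction on the depth; the step `step_le` extends a labelling of depth `n` by one
level in all ways that give siblings equal states, and sums the resulting product weights.
-/

open MeasureTheory

/-- The cone of a finite binary word `w`. -/
def cone (w : List Bool) : Set (ℕ → Bool) :=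
  {β | ∀ i, i < w.length → β i = w.getD i false}

/-- The prefix of length `n` of a branch `β`. -/
def pref (β : ℕ → Bool) (n : ℕ) : List Bool := List.ofFn fun i : Fin n => β i

/-- The set of states occurring infinitely often in `ρ`. -/
def infOcc {Q : Type*} (ρ : ℕ → Q) : Set Q := {q | ∀ N, ∃ n ≥ N, ρ n = q}

/-- Parity acceptance: the minimum priority occurring infinitely often is even. -/
def parityAcc {Q : Type*} (prio : Q → ℕ) (ρ : ℕ → Q) : Prop :=
  Even (sInf (prio '' infOcc ρ))

/-- The tree-automaton transition function `δ'` of `A_W`, copying each word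
transition to both children: `δ'(p,a,q,q) = δ(p,a,q)` and `δ'(p,a,q,q') = 0`
for `q ≠ q'`. -/
def deltaW {Q A : Type*} [DecidableEq Q] (δ : Q → A → Q → ℝ) :
    Q → A → Q → Q → ℝ :=
  fun p a q₀ q₁ => if q₀ = q₁ then δ p a q₀ else 0

/-- The cylinder of runs that agree with `τ` on all nodes of depth at most `n`. -/
def treeCyl {Q : Type*} (n : ℕ) (τ : List Bool → Q) : Set (List Bool → Q) :=
  {σ | ∀ u : List Bool, u.length ≤ n → σ u = τ u}

/-- The labelling that is `τ` up to depth `n` and in which both children of the node `v` of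
depth `n` carry `κ v`. Values at depth greater than `n + 1` are irrelevant. -/
def extendLevel {Q : Type*} (n : ℕ) (τ : List Bool → Q) (κ : (Fin n → Bool) → Q) : List Bool → Q :=
  fun u => if u.length ≤ n then τ u else κ (fun i => u.getD i false)

lemma extendLevel_of_le {Q : Type*} {n : ℕ} (τ : List Bool → Q) (κ : (Fin n → Bool) → Q)
    {u : List Bool} (h : u.length ≤ n) : extendLevel n τ κ u = τ u := if_pos h

lemma extendLevel_child {Q : Type*} {n : ℕ} (τ : List Bool → Q) (κ : (Fin n → Bool) → Q)
    (v : Fin n → Bool) (b : Bool) : extendLevel n τ κ (List.ofFn v ++ [b]) = κ v := by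
  rw [extendLevel, if_neg (by simp)]
  congr 1
  funext i
  simp [List.getD_eq_getElem?_getD]

lemma pref_succ (β : ℕ → Bool) (n : ℕ) :
    pref β (n + 1) = List.ofFn (fun i : Fin n => β i) ++ [β n] := by
  rw [pref, List.ofFn_succ_last]
  simp

lemma measurableSet_treeCyl {Q : Type*} [MeasurableSpace Q] [DiscreteMeasurableSpace Q]
    (n : ℕ) (τ : List Bool → Q) : MeasurableSet (treeCyl n τ) := by
  have : treeCyl n τ = ⋂ u : List Bool, ⋂ _ : u.length ≤ n, (fun σ => σ u) ⁻¹' {τ u} := by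
    ext σ; simp [treeCyl]
  rw [this]
  exact .iInter fun u => .iInter fun _ => measurable_pi_apply u (.of_discrete)

/-- The cylinder of runs whose labels along `β` agree with `s` up to depth `n`. -/
def branchCyl {Q : Type*} (β : ℕ → Bool) (n : ℕ) (s : ℕ → Q) : Set (List Bool → Q) :=
  {σ | ∀ i ≤ n, σ (pref β i) = s i}

lemma measurable_branch {Q : Type*} [MeasurableSpace Q] (β : ℕ → Bool) :
    Measurable (fun (σ : List Bool → Q) (n : ℕ) => σ (pref β n)) :=
  measurable_pi_lambda _ fun n => measurable_pi_apply (pref β n)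

lemma measurableSet_branchCyl {Q : Type*} [MeasurableSpace Q] [DiscreteMeasurableSpace Q]
    (β : ℕ → Bool) (n : ℕ) (s : ℕ → Q) : MeasurableSet (branchCyl β n s) := by
  have : branchCyl β n s = ⋂ i : ℕ, ⋂ _ : i ≤ n, (fun σ => σ (pref β i)) ⁻¹' {s i} := by
    ext σ; simp [branchCyl]
  rw [this]
  exact .iInter fun i => .iInter fun _ => measurable_pi_apply (pref β i) (.of_discrete)

section law

variable {Q A : Type*} [Fintype Q] [DecidableEq Q] [MeasurableSpace Q] [DiscreteMeasurableSpace Q]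
  {δ : Q → A → Q → ℝ} {qi : Q} {w : ℕ → A}
  {μt : Measure (List Bool → Q)}

/-- Given the labelling up to depth `n`, the next state along `β` is `q` with probability at least
the one prescribed by the word automaton. -/
lemma step_le
    (hδ : ∀ q a, (∀ p, 0 ≤ δ q a p) ∧ ∑ p, δ q a p = 1)
    (hμt : ∀ (n : ℕ) (ρ : List Bool → Q),
      μt {σ | ∀ u : List Bool, u.length ≤ n → σ u = ρ u} =
        (if ρ [] = qi then 1 else 0) *
          ∏ k ∈ Finset.range n, ∏ v : Fin k → Bool,
            ENNReal.ofReal (deltaW δ (ρ (List.ofFn v)) (w k)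
              (ρ (List.ofFn v ++ [false])) (ρ (List.ofFn v ++ [true]))))
    (β : ℕ → Bool) (n : ℕ) (τ : List Bool → Q) (q : Q) :
    μt (treeCyl n τ) * ENNReal.ofReal (δ (τ (pref β n)) (w n) q) ≤
      μt (treeCyl n τ ∩ {σ | σ (pref β (n + 1)) = q}) := by
  let b : Fin n → Bool := fun i => β i
  let t : (Fin n → Bool) → Finset Q := fun v => if v = b then {q} else Finset.univ
  have hext : ∀ κ : (Fin n → Bool) → Q, μt (treeCyl (n + 1) (extendLevel n τ κ)) =
      μt (treeCyl n τ) * ∏ v, ENNReal.ofReal (δ (τ (List.ofFn v)) (w n) (κ v)) := by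
    intro κ
    rw [treeCyl, treeCyl, hμt, hμt, Finset.prod_range_succ, mul_assoc]
    congr 1
    congr 1
    · refine Finset.prod_congr rfl fun k hk => Finset.prod_congr rfl fun v _ => ?_
      have hk := Finset.mem_range.1 hk
      rw [extendLevel_of_le _ _ (by simp; omega), extendLevel_of_le _ _ (by simp; omega),
        extendLevel_of_le _ _ (by simp; omega)]
    · refine Finset.prod_congr rfl fun v _ => ?_
      rw [extendLevel_of_le _ _ (by simp), extendLevel_child, extendLevel_child, deltaW, if_pos rfl]
  have hsum : ∑ κ ∈ Fintype.piFinset t, μt (treeCyl (n + 1) (extendLevel n τ κ)) =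
      μt (treeCyl n τ) * ENNReal.ofReal (δ (τ (pref β n)) (w n) q) := by
    simp_rw [hext]
    rw [← Finset.mul_sum, ← Finset.prod_univ_sum t
      fun v p => ENNReal.ofReal (δ (τ (List.ofFn v)) (w n) p)]
    congr 1
    rw [Finset.prod_eq_single b]
    · simp [t, b, pref]
    · intro v _ hv
      simp only [t, if_neg hv]
      rw [← ENNReal.ofReal_sum_of_nonneg fun p _ => (hδ _ _).1 p, (hδ _ _).2, ENNReal.ofReal_one]
    · simp
  rw [← hsum, ← measure_biUnion_finset _ fun κ _ => measurableSet_treeCyl _ _]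
  · refine measure_mono (Set.iUnion₂_subset fun κ hκ σ hσ => ⟨fun u hu => ?_, ?_⟩)
    · rw [hσ u (by omega), extendLevel_of_le _ _ hu]
    · have := Fintype.mem_piFinset.1 hκ b
      simp only [t, if_true, Finset.mem_singleton] at this
      change σ _ = q
      rw [hσ _ (by simp [pref]), pref_succ, extendLevel_child, this]
  · intro κ _ κ' _ hne
    refine Set.disjoint_left.2 fun σ h h' => hne (funext fun v => ?_)
    rw [← extendLevel_child τ κ v false, ← extendLevel_child τ κ' v false, ← h _ (by simp), ← h' _ (by simp)]

/-- The law of the labels along `β` dominates the run measure of the word automaton on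
cylinders. -/
lemma cyl_le
    (hδ : ∀ q a, (∀ p, 0 ≤ δ q a p) ∧ ∑ p, δ q a p = 1)
    (hμt : ∀ (n : ℕ) (ρ : List Bool → Q),
      μt {σ | ∀ u : List Bool, u.length ≤ n → σ u = ρ u} =
        (if ρ [] = qi then 1 else 0) *
          ∏ k ∈ Finset.range n, ∏ v : Fin k → Bool,
            ENNReal.ofReal (deltaW δ (ρ (List.ofFn v)) (w k)
              (ρ (List.ofFn v ++ [false])) (ρ (List.ofFn v ++ [true]))))
    (β : ℕ → Bool) (n : ℕ) (s : ℕ → Q) :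
    (if s 0 = qi then 1 else 0) *
        ∏ i ∈ Finset.range n, ENNReal.ofReal (δ (s i) (w i) (s (i + 1))) ≤
      μt (branchCyl β n s) := by
  induction n with
  | zero =>
    have h := hμt 0 (fun _ => s 0)
    simp only [Finset.range_zero, Finset.prod_empty] at h ⊢
    rw [← h]
    refine measure_mono fun σ hσ i hi => ?_
    obtain rfl : i = 0 := by omega
    exact hσ _ (by simp [pref])
  | succ n ih =>
    rw [Finset.prod_range_succ, ← mul_assoc]
    refine (mul_le_mul_left ih _).trans ?_
    -- Split both events according to the labelling of the finitely many nodes of depth `≤ n`.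
    have : Finite {u : List Bool // u.length ≤ n} := List.finite_length_le Bool n
    let R : (List Bool → Q) → ({u : List Bool // u.length ≤ n} → Q) := fun σ u => σ u
    have hR : Measurable R := measurable_pi_lambda _ fun u => measurable_pi_apply u.1
    have := Fintype.ofFinite ({u : List Bool // u.length ≤ n} → Q)
    have split : ∀ E : Set (List Bool → Q), μt E = ∑ f, μt (R ⁻¹' {f} ∩ E) := by
      intro E
      have := sum_measure_preimage_singleton (μ := μt.restrict E) (f := R) Finset.univ
        fun f _ => hR (.of_discrete)
      simp only [Measure.restrict_apply (hR (.of_discrete)), Finset.coe_univ, Set.preimage_univ,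
        Measure.restrict_apply_univ] at this
      exact this.symm
    rw [split (branchCyl β n s), split (branchCyl β (n + 1) s), Finset.sum_mul]
    refine Finset.sum_le_sum fun f _ => ?_
    rcases (R ⁻¹' {f} ∩ branchCyl β n s).eq_empty_or_nonempty with h | ⟨τ, hτf, hτ⟩
    · simp [h]
    · have hfib : R ⁻¹' {f} = treeCyl n τ := by
        rw [← Set.mem_singleton_iff.1 hτf]
        ext σ
        simp [R, treeCyl, funext_iff]
      have h := step_le hδ hμt β n τ (s (n + 1))
      rw [hτ n le_rfl] at h
      rw [hfib]
      refine (mul_le_mul_left (measure_mono Set.inter_subset_left) _).trans (h.trans ?_)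
      refine measure_mono fun σ hσ => ⟨hσ.1, fun i hi => ?_⟩
      rcases Nat.lt_or_ge n i with h' | h'
      · obtain rfl : i = n + 1 := by omega
        exact hσ.2
      · rw [hσ.1 _ (by simpa [pref] using h'), hτ i h']

end law

lemma eq_of_singleton_le {α : Type*} [Finite α] [MeasurableSpace α] [DiscreteMeasurableSpace α]
    (μ ν : Measure α) [IsProbabilityMeasure μ] [IsProbabilityMeasure ν]
    (h : ∀ a, μ {a} ≤ ν {a}) : μ = ν := by
  have := Fintype.ofFinite α
  refine Measure.ext_of_singleton fun a => ?_
  have hsum : ∑ a, μ.real {a} = ∑ a, ν.real {a} := by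
    rw [sum_measureReal_singleton, sum_measureReal_singleton]; simp
  have := (Finset.sum_eq_sum_iff_of_le fun a _ =>
    ENNReal.toReal_mono (measure_ne_top _ _) (h a)).1 hsum a (Finset.mem_univ a)
  exact (ENNReal.toReal_eq_toReal_iff' (measure_ne_top _ _) (measure_ne_top _ _)).1 this

/-- Probability measures on `ℕ → Q` that compare on initial cylinders coincide. -/
lemma eq_of_cyl_le {Q : Type*} [Finite Q] [MeasurableSpace Q] [DiscreteMeasurableSpace Q]
    (μ ν : Measure (ℕ → Q)) [IsProbabilityMeasure μ] [IsProbabilityMeasure ν]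
    (h : ∀ (n : ℕ) (s : ℕ → Q), μ {σ | ∀ i ≤ n, σ i = s i} ≤ ν {σ | ∀ i ≤ n, σ i = s i}) :
    μ = ν := by
  have hIic : ∀ n : ℕ, μ.map (Finset.Iic n).restrict = ν.map (Finset.Iic n).restrict := by
    intro n
    have hm : Measurable ((Finset.Iic n).restrict (π := fun _ : ℕ => Q)) :=
      Finset.measurable_restrict _
    have := Measure.isProbabilityMeasure_map (μ := μ) hm.aemeasurable
    have := Measure.isProbabilityMeasure_map (μ := ν) hm.aemeasurable
    refine eq_of_singleton_le _ _ fun f => ?_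
    rw [Measure.map_apply hm .of_discrete, Measure.map_apply hm .of_discrete]
    let s : ℕ → Q := fun i => if hi : i ∈ Finset.Iic n then f ⟨i, hi⟩ else f ⟨0, by simp⟩
    have hs : (Finset.Iic n).restrict (π := fun _ : ℕ => Q) ⁻¹' {f} =
        {σ | ∀ i ≤ n, σ i = s i} := by
      ext σ
      simp only [Set.mem_preimage, Set.mem_singleton_iff, funext_iff, Subtype.forall,
        Finset.restrict, Set.mem_ofPred_eq]
      refine forall_congr' fun i => ?_
      simp only [Finset.mem_Iic]
      refine forall_congr' fun hi => ?_
      simp [s, hi]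
    rw [hs]
    exact h n s
  refine IsProjectiveLimit.unique (P := fun I => ν.map I.restrict) (fun I => ?_) fun I => rfl
  have hI := I.subset_Iic_sup_id
  beta_reduce
  rw [← Finset.restrict₂_comp_restrict hI,
    ← Measure.map_map (Finset.measurable_restrict₂ hI) (Finset.measurable_restrict _),
    ← Measure.map_map (Finset.measurable_restrict₂ hI) (Finset.measurable_restrict _), hIic]

/-- The law of a run of `A_W` read along a fixed branch is the run measure of the word
automaton. -/
lemma map_branch_eq {Q A : Type*} [Fintype Q] [DecidableEq Q] [MeasurableSpace Q]
    [DiscreteMeasurableSpace Q] {δ : Q → A → Q → ℝ} {qi : Q} {w : ℕ → A}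
    (hδ : ∀ q a, (∀ p, 0 ≤ δ q a p) ∧ ∑ p, δ q a p = 1)
    (μw : Measure (ℕ → Q)) [IsProbabilityMeasure μw]
    (hμw : ∀ (n : ℕ) (ρ : ℕ → Q), μw {σ | ∀ i ≤ n, σ i = ρ i} =
      (if ρ 0 = qi then 1 else 0) *
        ∏ i ∈ Finset.range n, ENNReal.ofReal (δ (ρ i) (w i) (ρ (i + 1))))
    (μt : Measure (List Bool → Q)) [IsProbabilityMeasure μt]
    (hμt : ∀ (n : ℕ) (ρ : List Bool → Q),
      μt {σ | ∀ u : List Bool, u.length ≤ n → σ u = ρ u} =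
        (if ρ [] = qi then 1 else 0) *
          ∏ k ∈ Finset.range n, ∏ v : Fin k → Bool,
            ENNReal.ofReal (deltaW δ (ρ (List.ofFn v)) (w k)
              (ρ (List.ofFn v ++ [false])) (ρ (List.ofFn v ++ [true]))))
    (β : ℕ → Bool) :
    μt.map (fun σ n => σ (pref β n)) = μw := by
  have hm := measurable_branch (Q := Q) β
  have := Measure.isProbabilityMeasure_map (μ := μt) hm.aemeasurable
  refine (eq_of_cyl_le _ _ fun n s => ?_).symm
  rw [hμw]
  exact (cyl_le hδ hμt β n s).trans (Measure.le_map_apply hm.aemeasurable _)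

lemma measurableSet_parityAcc {Q : Type*} [Finite Q] [MeasurableSpace Q]
    [DiscreteMeasurableSpace Q] (prio : Q → ℕ) :
    MeasurableSet {ρ : ℕ → Q | parityAcc prio ρ} := by
  have hq : ∀ q, MeasurableSet {ρ : ℕ → Q | q ∈ infOcc ρ} := by
    intro q
    have : {ρ : ℕ → Q | q ∈ infOcc ρ} =
        ⋂ N : ℕ, ⋃ n : ℕ, ⋃ _ : n ≥ N, (fun ρ : ℕ → Q => ρ n) ⁻¹' {q} := by
      ext ρ; simp [infOcc]
    rw [this]
    exact .iInter fun N => .iUnion fun n => .iUnion fun _ =>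
      measurable_pi_apply n (.of_discrete)
  -- `Set Q` is finite, so the acceptance condition is a measurable condition on `infOcc ρ`.
  have hinf : Measurable (fun ρ : ℕ → Q => infOcc ρ) := measurable_set_iff.2 fun q =>
    measurable_to_prop (by simpa [Set.preimage, Set.mem_singleton_iff] using hq q)
  have hfin : MeasurableSet {S : Set Q | Even (sInf (prio '' S))} := (Set.toFinite _).measurableSet
  exact hinf hfin

/-- If a word `w` is almost-surely accepted by a probabilistic parity word
automaton `W = (Q,A,δ,qᵢ,prio)`, then the tree `t` with `t(u) = w_{|u|}`
belongs to the qualitative almost-sure language of the probabilistic parity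
tree automaton `A_W`: the set of qualitatively accepting runs of `A_W` on `t`
has measure 1 (for the run measure `μt` of `A_W` on `t`, characterised on
cylinders by products of transition probabilities). -/
theorem as_word_to_qas_tree {Q A : Type*} [Fintype Q] [DecidableEq Q]
    [MeasurableSpace Q] [DiscreteMeasurableSpace Q]
    (δ : Q → A → Q → ℝ) (qi : Q) (prio : Q → ℕ) (w : ℕ → A)
    (hδ : ∀ q a, (∀ p, 0 ≤ δ q a p) ∧ ∑ p, δ q a p = 1)
    -- the coin-flipping measure on branches
    (μ : Measure (ℕ → Bool)) [IsProbabilityMeasure μ]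
    (hμ : ∀ u : List Bool, μ (cone u) = (2 : ENNReal)⁻¹ ^ u.length)
    -- the run measure of `W` on `w`
    (μw : Measure (ℕ → Q)) [IsProbabilityMeasure μw]
    (hμw : ∀ (n : ℕ) (ρ : ℕ → Q), μw {σ | ∀ i ≤ n, σ i = ρ i} =
      (if ρ 0 = qi then 1 else 0) *
        ∏ i ∈ Finset.range n, ENNReal.ofReal (δ (ρ i) (w i) (ρ (i + 1))))
    -- `w` is almost-surely accepted by `W`
    (hacc : μw {ρ : ℕ → Q | parityAcc prio ρ} = 1)
    -- the run measure of the tree automaton `A_W` on the tree `t : u ↦ w_{|u|}`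
    (μt : Measure (List Bool → Q)) [IsProbabilityMeasure μt]
    (hμt : ∀ (n : ℕ) (ρ : List Bool → Q),
      μt {σ | ∀ u : List Bool, u.length ≤ n → σ u = ρ u} =
        (if ρ [] = qi then 1 else 0) *
          ∏ k ∈ Finset.range n, ∏ v : Fin k → Bool,
            ENNReal.ofReal (deltaW δ (ρ (List.ofFn v)) (w k)
              (ρ (List.ofFn v ++ [false])) (ρ (List.ofFn v ++ [true])))) :
    -- `t` is in the qualitative almost-sure language of `A_W`
    μt {ρ : List Bool → Q |
      μ {β : ℕ → Bool | parityAcc prio (fun n => ρ (pref β n))} = 1} = 1 := by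
  -- Nodes carry the discrete σ-algebra, so that evaluating a run at a node is jointly measurable.
  let _ : MeasurableSpace (List Bool) := ⊤
  have : DiscreteMeasurableSpace (List Bool) := ⟨fun _ => trivial⟩
  have hmeas : Measurable (fun (x : (List Bool → Q) × (ℕ → Bool)) (n : ℕ) => x.1 (pref x.2 n)) := by
    refine measurable_pi_lambda _ fun n => ?_
    have hev : Measurable (fun y : (List Bool → Q) × List Bool => y.1 y.2) :=
      measurable_from_prod_countable_left fun u =>
        measurable_pi_apply (X := fun _ : List Bool => Q) u
    have hpref : Measurable (fun β : ℕ → Bool => pref β n) := by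
      have : Measurable (fun β : ℕ → Bool => fun i : Fin n => β i) :=
        measurable_pi_lambda _ fun i => measurable_pi_apply _
      exact (Measurable.of_discrete (f := fun v : Fin n → Bool => List.ofFn v)).comp this
    exact hev.comp (measurable_fst.prodMk (hpref.comp measurable_snd))
  have hbranch : ∀ β : ℕ → Bool, ∀ᵐ σ ∂μt, parityAcc prio (fun n => σ (pref β n)) := by
    intro β
    have h : ∀ᵐ ρ ∂μw, parityAcc prio ρ :=
      (mem_ae_iff_prob_eq_one (measurableSet_parityAcc prio)).2 hacc
    rw [← map_branch_eq hδ μw hμw μt hμt β] at h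
    exact ae_of_ae_map (measurable_branch β).aemeasurable h
  have hset : MeasurableSet {x : (List Bool → Q) × (ℕ → Bool) |
      parityAcc prio (fun n => x.1 (pref x.2 n))} := hmeas (measurableSet_parityAcc prio)
  have hswap : ∀ᵐ σ ∂μt, ∀ᵐ β ∂μ, parityAcc prio (fun n => σ (pref β n)) :=
    (Measure.ae_ae_comm hset).2 (ae_of_all _ hbranch)
  have hone : ∀ᵐ σ ∂μt, μ {β | parityAcc prio (fun n => σ (pref β n))} = 1 := by
    filter_upwards [hswap] with σ hσ
    rw [measure_congr (Filter.eventuallyEq_univ.2 hσ), measure_univ]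
  rw [measure_congr (Filter.eventuallyEq_univ.2 hone), measure_univ]
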